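/- Let Ω ⊆ ℝ^d be open. Then the subalgebra of sublinear generalized functions is dense in 𝒢(Ω) with respect to the sharp topology. -/

import Mathlib

open Filter MeasureTheory Metric Set
open scoped Topology BigOperators

noncomputable section

/-- Euclidean space ℝ^d. -/
abbrev Euc (d : ℕ) : Type := EuclideanSpace ℝ (Fin d)

variable {d : ℕ}

/-- "P ε holds for small ε". -/
def SmallE (P : ℝ → Prop) : Prop :=
  ∃ ε₀ : ℝ, 0 < ε₀ ∧ ∀ ε : ℝ, 0 < ε → ε < ε₀ → P ε

/-- Directional derivative ∂ₑ u in the direction e. -/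
def pderivDir {F : Type} [NormedAddCommGroup F] [NormedSpace ℝ F]
    (e : Euc d) (u : Euc d → F) : Euc d → F :=
  fun x => fderiv ℝ u x e

/-- Multi-index partial derivative ∂^α u. -/
def partialDeriv {F : Type} [NormedAddCommGroup F] [NormedSpace ℝ F]
    (α : Fin d → ℕ) (u : Euc d → F) : Euc d → F :=
  (List.finRange d).foldr
    (fun i v => (pderivDir (EuclideanSpace.single i (1 : ℝ)))^[α i] v) u

/-- p_{α,K}(u) = sup_{x ∈ K} |∂^α u(x)|. -/
def pSemi {F : Type} [NormedAddCommGroup F] [NormedSpace ℝ F]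
    (α : Fin d → ℕ) (K : Set (Euc d)) (u : Euc d → F) : ℝ :=
  sSup ((fun x => ‖partialDeriv α u x‖) '' K)

/-- p_{k,K}(u) = max_{|α| = k} p_{α,K}(u). -/
def pSemiK {F : Type} [NormedAddCommGroup F] [NormedSpace ℝ F]
    (k : ℕ) (K : Set (Euc d)) (u : Euc d → F) : ℝ :=
  sSup {y : ℝ | ∃ α : Fin d → ℕ, (∑ i, α i) = k ∧ y = pSemi α K u}

/-- Moderate nets of smooth functions on Ω. -/
def Moderate (Ω : Set (Euc d)) (u : ℝ → Euc d → ℂ) : Prop :=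
  (∀ ε ∈ Set.Ioo (0:ℝ) 1, ContDiffOn ℝ (⊤ : ℕ∞) (u ε) Ω) ∧
  ∀ K : Set (Euc d), IsCompact K → K ⊆ Ω → ∀ α : Fin d → ℕ,
    ∃ N : ℕ, SmallE fun ε => pSemi α K (u ε) ≤ ε ^ (-(N : ℝ))

/-- Negligible nets of smooth functions on Ω. -/
def Negligible (Ω : Set (Euc d)) (u : ℝ → Euc d → ℂ) : Prop :=
  (∀ ε ∈ Set.Ioo (0:ℝ) 1, ContDiffOn ℝ (⊤ : ℕ∞) (u ε) Ω) ∧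
  ∀ K : Set (Euc d), IsCompact K → K ⊆ Ω → ∀ α : Fin d → ℕ, ∀ m : ℕ,
    SmallE fun ε => pSemi α K (u ε) ≤ ε ^ (m : ℝ)

/-- The algebra of moderate nets. -/
abbrev ModNet (Ω : Set (Euc d)) : Type := {u : ℝ → Euc d → ℂ // Moderate Ω u}

/-- Two moderate nets are identified when their difference is negligible. -/
def nulRel (Ω : Set (Euc d)) (u v : ModNet Ω) : Prop :=
  Negligible Ω (fun ε x => u.1 ε x - v.1 ε x)

/-- The special Colombeau algebra 𝒢(Ω). -/
abbrev Colombeau (Ω : Set (Euc d)) : Type := Quot (nulRel Ω)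

/-- The valuation of a net of complex numbers, with values in EReal
(⊤ corresponding to nets with arbitrarily good decay). -/
def valuation (z : ℝ → ℂ) : EReal :=
  sSup ((fun b : ℝ => (b : EReal)) '' {b : ℝ | SmallE fun ε => ‖z ε‖ ≤ ε ^ b})

/-- The sharp norm e^{-v(z)} of a net of complex numbers. -/
def sharpNorm (z : ℝ → ℂ) : ℝ :=
  if valuation z = ⊤ then 0 else Real.exp (-(valuation z).toReal)

/-- P_{k,K}(u) = ‖(p_{k,K}(u_ε))_ε‖ (computed via a representative;
independent of the representative). -/
def PNorm (Ω : Set (Euc d)) (k : ℕ) (K : Set (Euc d)) (u : Colombeau Ω) : ℝ :=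
  sharpNorm fun ε => ((pSemiK k K ((Quot.out u).1 ε) : ℝ) : ℂ)

/-- P_{α,K}(u) = ‖(p_{α,K}(u_ε))_ε‖ for a multi-index α. -/
def PNormA (Ω : Set (Euc d)) (α : Fin d → ℕ) (K : Set (Euc d)) (u : Colombeau Ω) : ℝ :=
  sharpNorm fun ε => ((pSemi α K ((Quot.out u).1 ε) : ℝ) : ℂ)

/-- The ultra-pseudo-seminorm P_{α,K} applied to the difference u - v. -/
def PNormDiff (Ω : Set (Euc d)) (α : Fin d → ℕ) (K : Set (Euc d))
    (u v : Colombeau Ω) : ℝ :=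
  sharpNorm fun ε =>
    ((pSemi α K (fun x => (Quot.out u).1 ε x - (Quot.out v).1 ε x) : ℝ) : ℂ)

/-- The sharp topology on 𝒢(Ω): generated by the balls of the
ultra-pseudo-seminorms P_{α,K}. -/
def sharpTopology (Ω : Set (Euc d)) : TopologicalSpace (Colombeau Ω) :=
  TopologicalSpace.generateFrom
    {S | ∃ (u : Colombeau Ω) (α : Fin d → ℕ) (K : Set (Euc d)) (r : ℝ),
      IsCompact K ∧ K ⊆ Ω ∧ 0 < r ∧ S = {v | PNormDiff Ω α K u v < r}}

/-- K satisfies the segment condition: there is r > 0 such that every x ∈ K lies on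
d line segments of length r, in linearly independent (unit) directions, contained in K. -/
def SegmentCond (K : Set (Euc d)) : Prop :=
  ∃ r : ℝ, 0 < r ∧ ∀ x ∈ K, ∃ e : Fin d → Euc d, LinearIndependent ℝ e ∧
    ∀ i : Fin d, ‖e i‖ = 1 ∧ ∃ a : ℝ, a ≤ 0 ∧ 0 ≤ a + r ∧
      ∀ t : ℝ, a ≤ t → t ≤ a + r → x + t • e i ∈ K

/-- 𝒢^∞(K). -/
def GInfK (Ω : Set (Euc d)) (K : Set (Euc d)) : Set (Colombeau Ω) :=
  {u | ∃ v : ModNet Ω, Quot.mk (nulRel Ω) v = u ∧ ∃ N : ℕ,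
    ∀ α : Fin d → ℕ, SmallE fun ε => pSemi α K (v.1 ε) ≤ ε ^ (-(N : ℝ))}

/-- 𝒢^{L,a}(K), the generalized functions of sublinear growth with slope
smaller than a on K. -/
def GLaK (Ω : Set (Euc d)) (a : ℝ) (K : Set (Euc d)) : Set (Colombeau Ω) :=
  {u | ∃ v : ModNet Ω, Quot.mk (nulRel Ω) v = u ∧ ∃ a' : ℝ, a' < a ∧ ∃ b : ℝ,
    ∀ α : Fin d → ℕ,
      SmallE fun ε => pSemi α K (v.1 ε) ≤ ε ^ (-(a' * (∑ i, (α i : ℝ))) - b)}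

/-- 𝒢^{L,0}(K) = ⋂_{a>0} 𝒢^{L,a}(K). -/
def GL0K (Ω : Set (Euc d)) (K : Set (Euc d)) : Set (Colombeau Ω) :=
  {u | ∀ a : ℝ, 0 < a → u ∈ GLaK Ω a K}

/-- 𝒢^∞(Ω) = ⋂_{K⊂⊂Ω} 𝒢^∞(K). -/
def GInfOmega (Ω : Set (Euc d)) : Set (Colombeau Ω) :=
  {u | ∀ K : Set (Euc d), IsCompact K → K ⊆ Ω → u ∈ GInfK Ω K}

/-- 𝒢^{L,a}(Ω) = ⋂_{K⊂⊂Ω} 𝒢^{L,a}(K). -/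
def GLaOmega (Ω : Set (Euc d)) (a : ℝ) : Set (Colombeau Ω) :=
  {u | ∀ K : Set (Euc d), IsCompact K → K ⊆ Ω → u ∈ GLaK Ω a K}

/-- 𝒢^{L,0}(Ω) = ⋂_{K⊂⊂Ω} 𝒢^{L,0}(K). -/
def GL0Omega (Ω : Set (Euc d)) : Set (Colombeau Ω) :=
  {u | ∀ K : Set (Euc d), IsCompact K → K ⊆ Ω → u ∈ GL0K Ω K}

/-- u ∈ 𝒢(Ω) is sublinear. -/
def Sublinear (Ω : Set (Euc d)) (u : Colombeau Ω) : Prop :=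
  ∃ v : ModNet Ω, Quot.mk (nulRel Ω) v = u ∧
    ∀ K : Set (Euc d), IsCompact K → K ⊆ Ω →
      ∀ x : ℝ → Euc d, (∀ ε ∈ Set.Ioo (0:ℝ) 1, x ε ∈ K) →
        ∃ k : ℝ, ∃ p : ℕ → ℝ,
          Filter.Tendsto (fun n : ℕ => p n + k * n) atTop atTop ∧
          ∀ α : Fin d → ℕ,
            SmallE fun ε => ‖partialDeriv α (v.1 ε) (x ε)‖ ≤ ε ^ (p (∑ i, α i))

/-- The scaled mollifier ψ_δ(x) = δ^{-d} ψ(x/δ). -/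
def mollify (ψ : Euc d → ℝ) (δ : ℝ) : Euc d → ℝ :=
  fun x => ((δ : ℝ) ^ d)⁻¹ * ψ (δ⁻¹ • x)

/-- Convolution u ⋆ ψ (with a real-valued kernel ψ). -/
def conv (u : Euc d → ℂ) (ψ : Euc d → ℝ) : Euc d → ℂ :=
  fun x => ∫ t : Euc d, u (x - t) * ((ψ t : ℝ) : ℂ)

/-- 𝒢_c(Ω): compactly supported generalized functions (restriction to Ω∖K
is 0 in 𝒢(Ω∖K), i.e. some representative is negligible on Ω∖K). -/
def GCompact (Ω : Set (Euc d)) : Set (Colombeau Ω) :=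
  {u | ∃ v : ModNet Ω, Quot.mk (nulRel Ω) v = u ∧
    ∃ K : Set (Euc d), IsCompact K ∧ K ⊆ Ω ∧ Negligible (Ω \ K) v.1}

/-!
Cut a moderate net `u_ε` off near a compact set and mollify it at scale `ε^κ`. Each derivative
falling on the mollifier costs a factor `ε^(-κ)`, so the order of growth of the derivatives of the
regularized net is linear in the order of differentiation. The error in `∂^α u_ε` is at most
`ε^κ` times a local Lipschitz constant, which is `O(ε^(-M))` by moderateness, so a large `κ`
achieves any prescribed accuracy for finitely many `α` at once. Compact sets, orders of
differentiation and accuracies form a directed set, along which the regularizations converge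
sharply to `u`.
-/

open scoped Convolution ContDiff

theorem smallE_iff_eventually {P : ℝ → Prop} : SmallE P ↔ ∀ᶠ ε in 𝓝[>] (0 : ℝ), P ε := by
  rw [Filter.Eventually, mem_nhdsGT_iff_exists_Ioo_subset]
  exact exists_congr fun ε₀ => and_congr_right fun _ =>
    ⟨fun h ε hε => h ε hε.1 hε.2, fun h ε hε hεε₀ => h ⟨hε, hεε₀⟩⟩

theorem eventually_const_mul_rpow_le_rpow (C : ℝ) {b b' : ℝ} (h : b' < b) :
    ∀ᶠ ε in 𝓝[>] (0 : ℝ), C * ε ^ b ≤ ε ^ b' := by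
  have hC := (tendsto_rpow_neg_nhdsGT_zero (sub_neg.2 h)).eventually_ge_atTop C
  filter_upwards [hC, self_mem_nhdsWithin] with ε hCε hε
  calc C * ε ^ b ≤ ε ^ (b' - b) * ε ^ b :=
        mul_le_mul_of_nonneg_right hCε (Real.rpow_nonneg (le_of_lt hε) b)
    _ = ε ^ b' := by rw [← Real.rpow_add hε, sub_add_cancel]

section PartialDerivatives

variable {F : Type} [NormedAddCommGroup F] [NormedSpace ℝ F] {f g : Euc d → F} {U : Set (Euc d)}

theorem pderivDir_congr {x : Euc d} (h : f =ᶠ[𝓝 x] g) (e : Euc d) :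
    pderivDir e f =ᶠ[𝓝 x] pderivDir e g :=
  h.fderiv.fun_comp (· e)

theorem contDiffOn_pderivDir (hU : IsOpen U) (hf : ContDiffOn ℝ ∞ f U) (e : Euc d) :
    ContDiffOn ℝ ∞ (pderivDir e f) U :=
  (hf.fderiv_of_isOpen hU le_rfl).clm_apply contDiffOn_const

theorem pderivDir_comm (hU : IsOpen U) (hf : ContDiffOn ℝ ∞ f U) (e e' : Euc d) :
    EqOn (pderivDir e (pderivDir e' f)) (pderivDir e' (pderivDir e f)) U := by
  intro x hx
  have hfx : ContDiffAt ℝ ∞ f x := hf.contDiffAt (hU.mem_nhds hx)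
  have hf' : DifferentiableAt ℝ (fderiv ℝ f) x :=
    (hfx.fderiv_right (m := ∞) le_rfl).differentiableAt (by simp)
  have second_derivative (a b : Euc d) :
      pderivDir a (pderivDir b f) x = fderiv ℝ (fderiv ℝ f) x a b := by
    unfold pderivDir
    rw [fderiv_clm_apply hf' (differentiableAt_const _)]
    simp
  rw [second_derivative, second_derivative]
  exact hfx.isSymmSndFDerivAt
    (by simpa only [minSmoothness_of_isRCLikeNormedField] using ENat.LEInfty.out) e e'

theorem pderivDir_const_smul (c : ℝ) (f : Euc d → F) (e : Euc d) :
    pderivDir e (c • f) = c • pderivDir e f := by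
  funext x
  simp [pderivDir, fderiv_const_smul_field]

theorem exists_norm_fderiv_le_mul (d : ℕ) (F : Type) [NormedAddCommGroup F] [NormedSpace ℝ F] :
    ∃ A : ℝ, 0 < A ∧ ∀ (f : Euc d → F) (x : Euc d) (C : ℝ), 0 ≤ C →
      (∀ i, ‖pderivDir (EuclideanSpace.single i 1) f x‖ ≤ C) → ‖fderiv ℝ f x‖ ≤ A * C := by
  obtain ⟨A, hA, h⟩ :=
    (EuclideanSpace.basisFun (Fin d) ℝ).toBasis.exists_opNorm_le (F := F)
  exact ⟨A, hA, fun f x C hC hf => h hC fun i => by simpa [pderivDir] using hf i⟩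

/-- The iterated derivative of `f` along a list of directions, the head of the list being the
outermost derivative. Unlike `partialDeriv`, it lends itself to induction. -/
def iteratedPDeriv (l : List (Euc d)) (f : Euc d → F) : Euc d → F :=
  l.foldr pderivDir f

@[simp]
theorem iteratedPDeriv_nil (f : Euc d → F) : iteratedPDeriv [] f = f := rfl

@[simp]
theorem iteratedPDeriv_cons (e : Euc d) (l : List (Euc d)) (f : Euc d → F) :
    iteratedPDeriv (e :: l) f = pderivDir e (iteratedPDeriv l f) := rfl

theorem iteratedPDeriv_append (l l' : List (Euc d)) (f : Euc d → F) :
    iteratedPDeriv (l ++ l') f = iteratedPDeriv l (iteratedPDeriv l' f) :=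
  List.foldr_append

theorem iteratedPDeriv_replicate (n : ℕ) (e : Euc d) (f : Euc d → F) :
    iteratedPDeriv (List.replicate n e) f = (pderivDir e)^[n] f := by
  induction n with
  | zero => rfl
  | succ n ih =>
    rw [List.replicate_succ, iteratedPDeriv_cons, ih, Function.iterate_succ_apply']

theorem iteratedPDeriv_congr {x : Euc d} (h : f =ᶠ[𝓝 x] g) (l : List (Euc d)) :
    iteratedPDeriv l f =ᶠ[𝓝 x] iteratedPDeriv l g := by
  induction l with
  | nil => exact h
  | cons e l ih => exact pderivDir_congr ih e

theorem contDiffOn_iteratedPDeriv (hU : IsOpen U) (hf : ContDiffOn ℝ ∞ f U) (l : List (Euc d)) :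
    ContDiffOn ℝ ∞ (iteratedPDeriv l f) U := by
  induction l with
  | nil => exact hf
  | cons e l ih => exact contDiffOn_pderivDir hU ih e

theorem contDiff_iteratedPDeriv (hf : ContDiff ℝ ∞ f) (l : List (Euc d)) :
    ContDiff ℝ ∞ (iteratedPDeriv l f) :=
  contDiffOn_univ.1 (contDiffOn_iteratedPDeriv isOpen_univ hf.contDiffOn l)

theorem hasCompactSupport_iteratedPDeriv (hf : HasCompactSupport f) (l : List (Euc d)) :
    HasCompactSupport (iteratedPDeriv l f) := by
  induction l with
  | nil => exact hf
  | cons e l ih => exact ih.fderiv_apply ℝ e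

theorem iteratedPDeriv_zero (l : List (Euc d)) : iteratedPDeriv l (0 : Euc d → F) = 0 := by
  induction l with
  | nil => rfl
  | cons e l ih => funext x; simp [ih, pderivDir]

theorem iteratedPDeriv_sub (hU : IsOpen U) (hf : ContDiffOn ℝ ∞ f U) (hg : ContDiffOn ℝ ∞ g U)
    (l : List (Euc d)) :
    EqOn (iteratedPDeriv l (f - g)) (iteratedPDeriv l f - iteratedPDeriv l g) U := by
  induction l with
  | nil => exact fun _ _ => rfl
  | cons e l ih =>
    intro x hx
    have differentiableAt {h : Euc d → F} (hh : ContDiffOn ℝ ∞ h U) :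
        DifferentiableAt ℝ (iteratedPDeriv l h) x :=
      ((contDiffOn_iteratedPDeriv hU hh l).contDiffAt (hU.mem_nhds hx)).differentiableAt (by simp)
    rw [iteratedPDeriv_cons,
      (pderivDir_congr (ih.eventuallyEq_of_mem (hU.mem_nhds hx)) e).eq_of_nhds]
    simp [pderivDir, fderiv_sub (differentiableAt hf) (differentiableAt hg)]

theorem iteratedPDeriv_perm (hU : IsOpen U) (hf : ContDiffOn ℝ ∞ f U) {l l' : List (Euc d)}
    (h : l.Perm l') : EqOn (iteratedPDeriv l f) (iteratedPDeriv l' f) U := by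
  induction h with
  | nil => exact fun _ _ => rfl
  | cons e _ ih =>
    exact fun x hx => (pderivDir_congr (ih.eventuallyEq_of_mem (hU.mem_nhds hx)) e).eq_of_nhds
  | swap e e' l => exact pderivDir_comm hU (contDiffOn_iteratedPDeriv hU hf l) e' e
  | trans _ _ ih ih' => exact ih.trans ih'

/-- The list of coordinate directions in which the derivative `∂^α` is taken. -/
def coordDirs (α : Fin d → ℕ) : List (Euc d) :=
  (List.finRange d).flatMap fun i => List.replicate (α i) (EuclideanSpace.single i 1)

theorem length_coordDirs (α : Fin d → ℕ) : (coordDirs α).length = ∑ i, α i := by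
  simp [coordDirs, List.length_flatMap, Fin.sum_univ_def]

theorem cons_perm_coordDirs (i : Fin d) (α : Fin d → ℕ) :
    (EuclideanSpace.single i 1 :: coordDirs α).Perm (coordDirs (α + Pi.single i 1)) := by
  classical
  refine List.perm_iff_count.2 fun e => ?_
  simp [coordDirs, List.count_flatMap, List.count_cons, List.count_replicate, Function.comp_def,
    ← Fin.sum_univ_def, Pi.single_apply, ← Finset.sum_filter, Finset.sum_add_distrib]

theorem partialDeriv_eq_iteratedPDeriv (α : Fin d → ℕ) (f : Euc d → F) :
    partialDeriv α f = iteratedPDeriv (coordDirs α) f := by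
  unfold partialDeriv coordDirs
  induction List.finRange d with
  | nil => rfl
  | cons i l ih =>
    rw [List.foldr_cons, ih, List.flatMap_cons, iteratedPDeriv_append, iteratedPDeriv_replicate]

theorem partialDeriv_zero_index (f : Euc d → F) : partialDeriv 0 f = f := by
  have hnil : coordDirs (0 : Fin d → ℕ) = [] :=
    List.eq_nil_of_length_eq_zero (by simp [length_coordDirs])
  rw [partialDeriv_eq_iteratedPDeriv, hnil, iteratedPDeriv_nil]

theorem partialDeriv_congr {x : Euc d} (h : f =ᶠ[𝓝 x] g) (α : Fin d → ℕ) :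
    partialDeriv α f =ᶠ[𝓝 x] partialDeriv α g := by
  simpa only [partialDeriv_eq_iteratedPDeriv] using iteratedPDeriv_congr h (coordDirs α)

theorem contDiffOn_partialDeriv (hU : IsOpen U) (hf : ContDiffOn ℝ ∞ f U) (α : Fin d → ℕ) :
    ContDiffOn ℝ ∞ (partialDeriv α f) U := by
  rw [partialDeriv_eq_iteratedPDeriv]
  exact contDiffOn_iteratedPDeriv hU hf _

theorem partialDeriv_zero (α : Fin d → ℕ) : partialDeriv α (0 : Euc d → F) = 0 := by
  rw [partialDeriv_eq_iteratedPDeriv, iteratedPDeriv_zero]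

theorem partialDeriv_sub (hU : IsOpen U) (hf : ContDiffOn ℝ ∞ f U) (hg : ContDiffOn ℝ ∞ g U)
    (α : Fin d → ℕ) :
    EqOn (partialDeriv α (f - g)) (partialDeriv α f - partialDeriv α g) U := by
  simpa only [partialDeriv_eq_iteratedPDeriv] using iteratedPDeriv_sub hU hf hg (coordDirs α)

theorem partialDeriv_add_single (hU : IsOpen U) (hf : ContDiffOn ℝ ∞ f U) (α : Fin d → ℕ)
    (i : Fin d) :
    EqOn (partialDeriv (α + Pi.single i 1) f)
      (pderivDir (EuclideanSpace.single i 1) (partialDeriv α f)) U := by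
  simp only [partialDeriv_eq_iteratedPDeriv]
  exact (iteratedPDeriv_perm hU hf (cons_perm_coordDirs i α)).symm

end PartialDerivatives

section Convolution

variable {F : Type} [NormedAddCommGroup F] [NormedSpace ℝ F] {f : Euc d → ℝ} {g : Euc d → F}

theorem pderivDir_convolution_right (hf : LocallyIntegrable f) (hg : ContDiff ℝ ∞ g)
    (hgc : HasCompactSupport g) (e : Euc d) :
    pderivDir e (f ⋆ g) = f ⋆ pderivDir e g := by
  funext x
  have hderiv := hgc.hasFDerivAt_convolution_right (ContinuousLinearMap.lsmul ℝ ℝ) hf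
    (hg.of_le (mod_cast le_top)) x
  rw [pderivDir, hderiv.fderiv]
  exact convolution_precompR_apply _ hf (hgc.fderiv ℝ) (hg.continuous_fderiv (by simp)) x e

theorem iteratedPDeriv_convolution_right (hf : LocallyIntegrable f) (hg : ContDiff ℝ ∞ g)
    (hgc : HasCompactSupport g) (l : List (Euc d)) :
    iteratedPDeriv l (f ⋆ g) = f ⋆ iteratedPDeriv l g := by
  induction l with
  | nil => rfl
  | cons e l ih =>
    rw [iteratedPDeriv_cons, ih, pderivDir_convolution_right hf (contDiff_iteratedPDeriv hg l)
      (hasCompactSupport_iteratedPDeriv hgc l), iteratedPDeriv_cons]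

theorem pderivDir_convolution_left (hf : ContDiff ℝ ∞ f) (hfc : HasCompactSupport f)
    (hg : LocallyIntegrable g) (e : Euc d) :
    pderivDir e (f ⋆ g) = pderivDir e f ⋆ g := by
  funext x
  simp +singlePass only [← convolution_flip]
  have hderiv := hfc.hasFDerivAt_convolution_right (ContinuousLinearMap.lsmul ℝ ℝ).flip hg
    (hf.of_le (mod_cast le_top)) x
  rw [pderivDir, hderiv.fderiv]
  exact convolution_precompR_apply _ hg (hfc.fderiv ℝ) (hf.continuous_fderiv (by simp)) x e

theorem iteratedPDeriv_convolution_left (hf : ContDiff ℝ ∞ f) (hfc : HasCompactSupport f)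
    (hg : LocallyIntegrable g) (l : List (Euc d)) :
    iteratedPDeriv l (f ⋆ g) = iteratedPDeriv l f ⋆ g := by
  induction l with
  | nil => rfl
  | cons e l ih =>
    rw [iteratedPDeriv_cons, ih, pderivDir_convolution_left (contDiff_iteratedPDeriv hf l)
      (hasCompactSupport_iteratedPDeriv hfc l) hg, iteratedPDeriv_cons]

theorem norm_convolution_le_integral_norm_mul (hf : Integrable f) {B : ℝ} (hg : ∀ x, ‖g x‖ ≤ B)
    (x : Euc d) : ‖(f ⋆ g) x‖ ≤ (∫ t, ‖f t‖) * B := by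
  rw [← integral_mul_const]
  refine norm_integral_le_of_norm_le (hf.norm.mul_const B) (.of_forall fun t => ?_)
  simpa [norm_smul] using mul_le_mul_of_nonneg_left (hg (x - t)) (norm_nonneg (f t))

end Convolution

section Mollifier

variable {φ : Euc d → ℝ} {δ : ℝ}

theorem contDiff_mollify (hφ : ContDiff ℝ ∞ φ) (δ : ℝ) : ContDiff ℝ ∞ (mollify φ δ) :=
  contDiff_const.mul (hφ.comp (contDiff_const_smul δ⁻¹))

theorem hasCompactSupport_mollify (hφ : HasCompactSupport φ) (hδ : δ ≠ 0) :
    HasCompactSupport (mollify φ δ) :=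
  (hφ.comp_smul (inv_ne_zero hδ)).mul_left

theorem integral_mollify (φ : Euc d → ℝ) (hδ : 0 < δ) : ∫ x, mollify φ δ x = ∫ x, φ x := by
  simp only [mollify]
  rw [integral_const_mul, Measure.integral_comp_inv_smul_of_nonneg _ _ hδ.le,
    finrank_euclideanSpace_fin, smul_eq_mul, inv_mul_cancel_left₀ (pow_pos hδ d).ne']

theorem norm_mollify (φ : Euc d → ℝ) (hδ : 0 < δ) (x : Euc d) :
    ‖mollify φ δ x‖ = mollify (fun y => ‖φ y‖) δ x := by
  rw [mollify, mollify, norm_mul, Real.norm_of_nonneg (by positivity)]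

theorem support_mollify_subset {r : ℝ} (hφ : Function.support φ ⊆ ball 0 r) (hδ : 0 < δ) :
    Function.support (mollify φ δ) ⊆ ball 0 (δ * r) := by
  intro x hx
  have hx' : δ⁻¹ • x ∈ ball (0 : Euc d) r := hφ (right_ne_zero_of_mul hx)
  rwa [mem_ball_zero_iff, norm_smul, norm_inv, Real.norm_of_nonneg hδ.le,
    inv_mul_lt_iff₀ hδ, ← mem_ball_zero_iff] at hx'

theorem pderivDir_mollify (φ : Euc d → ℝ) (δ : ℝ) (e : Euc d) :
    pderivDir e (mollify φ δ) = δ⁻¹ • mollify (pderivDir e φ) δ := by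
  have hmollify : mollify φ δ = (δ ^ d)⁻¹ • fun x => φ (δ⁻¹ • x) := rfl
  rw [hmollify, pderivDir_const_smul]
  funext x
  simp [pderivDir, fderiv_comp_smul, mollify, mul_left_comm]

theorem iteratedPDeriv_mollify (φ : Euc d → ℝ) (δ : ℝ) (l : List (Euc d)) :
    iteratedPDeriv l (mollify φ δ) = δ⁻¹ ^ l.length • mollify (iteratedPDeriv l φ) δ := by
  induction l with
  | nil => simp
  | cons e l ih =>
    rw [iteratedPDeriv_cons, ih, pderivDir_const_smul, pderivDir_mollify, smul_smul,
      List.length_cons, pow_succ, iteratedPDeriv_cons]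

theorem integral_norm_iteratedPDeriv_mollify (φ : Euc d → ℝ) (hδ : 0 < δ) (l : List (Euc d)) :
    ∫ x, ‖iteratedPDeriv l (mollify φ δ) x‖ = δ⁻¹ ^ l.length * ∫ x, ‖iteratedPDeriv l φ x‖ := by
  have hnorm (x : Euc d) : ‖iteratedPDeriv l (mollify φ δ) x‖ =
      δ⁻¹ ^ l.length * mollify (fun y => ‖iteratedPDeriv l φ y‖) δ x := by
    rw [iteratedPDeriv_mollify, Pi.smul_apply, norm_smul, norm_mollify _ hδ,
      Real.norm_of_nonneg (by positivity)]
  simp only [hnorm]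
  rw [integral_const_mul, integral_mollify _ hδ]

variable {F : Type} [NormedAddCommGroup F] [NormedSpace ℝ F] {g : Euc d → F}

theorem norm_partialDeriv_mollify_convolution_le (hφ : ContDiff ℝ ∞ φ) (hφc : HasCompactSupport φ)
    (hδ : 0 < δ) (hg : LocallyIntegrable g) {B : ℝ} (hB : ∀ x, ‖g x‖ ≤ B) (α : Fin d → ℕ)
    (x : Euc d) :
    ‖partialDeriv α (mollify φ δ ⋆ g) x‖ ≤
      δ⁻¹ ^ (∑ i, α i) * (∫ y, ‖partialDeriv α φ y‖) * B := by
  have hφδ : ContDiff ℝ ∞ (mollify φ δ) := contDiff_mollify hφ δ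
  have hφδc : HasCompactSupport (mollify φ δ) := hasCompactSupport_mollify hφc hδ.ne'
  simp only [partialDeriv_eq_iteratedPDeriv]
  rw [iteratedPDeriv_convolution_left hφδ hφδc hg, ← length_coordDirs α,
    ← integral_norm_iteratedPDeriv_mollify φ hδ]
  exact norm_convolution_le_integral_norm_mul ((contDiff_iteratedPDeriv hφδ _).continuous
    |>.integrable_of_hasCompactSupport (hasCompactSupport_iteratedPDeriv hφδc _)) hB x

/-- Smooth probability densities supported in the open unit ball: the kernels whose rescalings
`mollify φ δ` approximate the identity as `δ → 0`. -/
structure IsMollifier (φ : Euc d → ℝ) : Prop where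
  contDiff : ContDiff ℝ ∞ φ
  nonneg : ∀ x, 0 ≤ φ x
  integral_eq_one : ∫ x, φ x = 1
  support_subset : Function.support φ ⊆ ball 0 1

theorem exists_isMollifier (d : ℕ) : ∃ φ : Euc d → ℝ, IsMollifier φ := by
  let b : ContDiffBump (0 : Euc d) := ⟨1 / 2, 1, by norm_num, by norm_num⟩
  exact ⟨b.normed volume, b.contDiff_normed, b.nonneg_normed, b.integral_normed,
    b.support_normed_eq.subset⟩

theorem IsMollifier.hasCompactSupport (hφ : IsMollifier φ) : HasCompactSupport φ :=
  .of_support_subset_isCompact (isCompact_closedBall 0 1)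
    (hφ.support_subset.trans ball_subset_closedBall)

theorem IsMollifier.norm_convolution_sub_le [CompleteSpace F] (hφ : IsMollifier φ) (hδ : 0 < δ)
    (hg : Differentiable ℝ g) {x : Euc d} {C : ℝ} (hC : 0 ≤ C)
    (hbound : ∀ y ∈ ball x δ, ‖fderiv ℝ g y‖ ≤ C) :
    ‖(mollify φ δ ⋆ g) x - g x‖ ≤ C * δ := by
  rw [← dist_eq_norm]
  refine dist_convolution_le (mul_nonneg hC hδ.le)
    (by simpa using support_mollify_subset hφ.support_subset hδ)
    (fun y => mul_nonneg (by positivity) (hφ.nonneg _))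
    ((integral_mollify φ hδ).trans hφ.integral_eq_one)
    hg.continuous.aestronglyMeasurable fun y hy => ?_
  calc dist (g y) (g x) = ‖g y - g x‖ := dist_eq_norm _ _
    _ ≤ C * ‖y - x‖ := (convex_ball x δ).norm_image_sub_le_of_norm_fderiv_le
        (fun z _ => hg z) hbound (mem_ball_self hδ) hy
    _ ≤ C * δ := mul_le_mul_of_nonneg_left (mem_ball_iff_norm.1 hy).le hC

theorem IsMollifier.norm_partialDeriv_convolution_sub_le [CompleteSpace F] (hφ : IsMollifier φ)
    (hδ : 0 < δ) (hg : ContDiff ℝ ∞ g) (hgc : HasCompactSupport g) (α : Fin d → ℕ) {x : Euc d}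
    {C : ℝ} (hC : 0 ≤ C) (hbound : ∀ y ∈ ball x δ, ‖fderiv ℝ (partialDeriv α g) y‖ ≤ C) :
    ‖partialDeriv α (mollify φ δ ⋆ g) x - partialDeriv α g x‖ ≤ C * δ := by
  simp only [partialDeriv_eq_iteratedPDeriv] at hbound ⊢
  rw [iteratedPDeriv_convolution_right
    (contDiff_mollify hφ.contDiff δ).continuous.locallyIntegrable hg hgc]
  exact hφ.norm_convolution_sub_le hδ
    ((contDiff_iteratedPDeriv hg _).differentiable (by simp)) hC hbound

end Mollifier

section Cutoff

variable {F : Type} [NormedAddCommGroup F] [NormedSpace ℝ F] {f : Euc d → F} {χ : Euc d → ℝ}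
  {K Ω : Set (Euc d)}

/-- Smooth functions with compact support in `Ω`, bounded by `1`, and equal to `1` near `K`. -/
structure IsCutoff (χ : Euc d → ℝ) (K Ω : Set (Euc d)) : Prop where
  contDiff : ContDiff ℝ ∞ χ
  hasCompactSupport : HasCompactSupport χ
  tsupport_subset : tsupport χ ⊆ Ω
  norm_le_one : ∀ x, ‖χ x‖ ≤ 1
  eventually_eq_one : ∀ᶠ x in 𝓝ˢ K, χ x = 1

theorem exists_isCutoff (hK : IsCompact K) (hΩ : IsOpen Ω) (hKΩ : K ⊆ Ω) :
    ∃ χ, IsCutoff χ K Ω := by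
  obtain ⟨S, hS, hKS, hSΩ⟩ := exists_compact_between hK hΩ hKΩ
  obtain ⟨χ, hχ_one, hχ_zero, hχ_Icc⟩ := exists_contMDiffMap_one_nhds_of_subset_interior
    (modelWithCornersSelf ℝ (Euc d)) (n := ⊤) hK.isClosed hKS
  refine ⟨χ, χ.contMDiff.contDiff, .intro hS hχ_zero, ?_, fun x => ?_, hχ_one⟩
  · exact (closure_minimal (Function.support_subset_iff'.2 hχ_zero) hS.isClosed).trans hSΩ
  · exact (Real.norm_of_nonneg (hχ_Icc x).1).trans_le (hχ_Icc x).2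

namespace IsCutoff

theorem subset (hχ : IsCutoff χ K Ω) : K ⊆ Ω := fun x hx =>
  hχ.tsupport_subset (subset_tsupport χ (by simp [hχ.eventually_eq_one.self_of_nhdsSet x hx]))

theorem contDiff_smul (hχ : IsCutoff χ K Ω) (hΩ : IsOpen Ω) (hf : ContDiffOn ℝ ∞ f Ω) :
    ContDiff ℝ ∞ (χ • f) := by
  refine contDiff_iff_contDiffAt.2 fun x => ?_
  by_cases hx : x ∈ tsupport χ
  · exact hχ.contDiff.contDiffAt.smul (hf.contDiffAt (hΩ.mem_nhds (hχ.tsupport_subset hx)))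
  · have hzero : χ • f =ᶠ[𝓝 x] 0 := (notMem_tsupport_iff_eventuallyEq.1 hx).mono fun y hy => by
      simp [hy]
    exact contDiffAt_const.congr_of_eventuallyEq hzero

theorem norm_smul_le (hχ : IsCutoff χ K Ω) {B : ℝ} (hB : 0 ≤ B)
    (hf : ∀ x ∈ tsupport χ, ‖f x‖ ≤ B) (x : Euc d) : ‖(χ • f) x‖ ≤ B := by
  rw [Pi.smul_apply', norm_smul]
  by_cases hx : x ∈ tsupport χ
  · exact (mul_le_mul (hχ.norm_le_one x) (hf x hx) (norm_nonneg _) zero_le_one).trans_eq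
      (one_mul B)
  · simpa [image_eq_zero_of_notMem_tsupport hx] using hB

theorem partialDeriv_smul (hχ : IsCutoff χ K Ω) (f : Euc d → F) (α : Fin d → ℕ) :
    EqOn (partialDeriv α (χ • f)) (partialDeriv α f) K := by
  intro x hx
  have hχx : ∀ᶠ y in 𝓝 x, χ y = 1 := eventually_nhdsSet_iff_forall.1 hχ.eventually_eq_one x hx
  exact (partialDeriv_congr (hχx.mono fun y hy => by simp [hy]) α).eq_of_nhds

end IsCutoff

end Cutoff

section Nets

variable {F : Type} [NormedAddCommGroup F] [NormedSpace ℝ F] {u v : ℝ → Euc d → F}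
  {K L Ω : Set (Euc d)} {α : Fin d → ℕ} {b b' : ℝ}

/-- Nets `(u_ε)_{ε ∈ (0,1)}` of functions that are smooth on `Ω`; as in `Moderate`, the values at
`ε ∉ (0,1)` are irrelevant. -/
def SmoothNet (Ω : Set (Euc d)) (u : ℝ → Euc d → F) : Prop :=
  ∀ ε ∈ Ioo (0 : ℝ) 1, ContDiffOn ℝ ∞ (u ε) Ω

/-- The estimate `p_{α,K}(u_ε) ≤ ε^b` for small `ε`, stated pointwise on `K` so that it is
meaningful without boundedness of `∂^α u_ε` on `K`. -/
def DerivBound (α : Fin d → ℕ) (K : Set (Euc d)) (u : ℝ → Euc d → F) (b : ℝ) : Prop :=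
  ∀ᶠ ε in 𝓝[>] (0 : ℝ), ∀ x ∈ K, ‖partialDeriv α (u ε) x‖ ≤ ε ^ b

theorem SmoothNet.sub (hu : SmoothNet Ω u) (hv : SmoothNet Ω v) : SmoothNet Ω (u - v) :=
  fun ε hε => (hu ε hε).sub (hv ε hε)

theorem DerivBound.mono (h : DerivBound α K u b) (hLK : L ⊆ K) (hb : b' ≤ b) :
    DerivBound α L u b' := by
  filter_upwards [h, Ioo_mem_nhdsGT one_pos] with ε hε hε01 x hx
  exact (hε x (hLK hx)).trans (Real.rpow_le_rpow_of_exponent_ge hε01.1 hε01.2.le hb)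

theorem DerivBound.sub (hu : DerivBound α K u b) (hv : DerivBound α K v b) (hΩ : IsOpen Ω)
    (hKΩ : K ⊆ Ω) (hu_smooth : SmoothNet Ω u) (hv_smooth : SmoothNet Ω v) (hb : b' < b) :
    DerivBound α K (u - v) b' := by
  filter_upwards [hu, hv, Ioo_mem_nhdsGT one_pos, eventually_const_mul_rpow_le_rpow 2 hb]
    with ε huε hvε hε htwo x hx
  calc ‖partialDeriv α (u ε - v ε) x‖
      = ‖partialDeriv α (u ε) x - partialDeriv α (v ε) x‖ :=
        congrArg norm (partialDeriv_sub hΩ (hu_smooth ε hε) (hv_smooth ε hε) α (hKΩ hx))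
    _ ≤ ε ^ b + ε ^ b := norm_sub_le_of_le (huε x hx) (hvε x hx)
    _ = 2 * ε ^ b := (two_mul _).symm
    _ ≤ ε ^ b' := htwo

theorem smallE_pSemi_le_iff (hΩ : IsOpen Ω) (hK : IsCompact K) (hKΩ : K ⊆ Ω)
    (hu : SmoothNet Ω u) (α : Fin d → ℕ) (b : ℝ) :
    (SmallE fun ε => pSemi α K (u ε) ≤ ε ^ b) ↔ DerivBound α K u b := by
  rw [smallE_iff_eventually]
  refine eventually_congr ?_
  filter_upwards [Ioo_mem_nhdsGT one_pos] with ε hε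
  have hcont : ContinuousOn (fun x => ‖partialDeriv α (u ε) x‖) K :=
    ((contDiffOn_partialDeriv hΩ (hu ε hε) α).continuousOn.mono hKΩ).norm
  refine ⟨fun h x hx => ?_, fun h => ?_⟩
  · exact (le_csSup (hK.bddAbove_image hcont) (mem_image_of_mem _ hx)).trans h
  · exact Real.sSup_le (forall_mem_image.2 h) (Real.rpow_nonneg hε.1.le b)

end Nets

section Colombeau

variable {Ω K : Set (Euc d)}

theorem moderate_iff (hΩ : IsOpen Ω) {u : ℝ → Euc d → ℂ} :
    Moderate Ω u ↔ SmoothNet Ω u ∧ ∀ K : Set (Euc d), IsCompact K → K ⊆ Ω → ∀ α : Fin d → ℕ,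
      ∃ N : ℕ, DerivBound α K u (-(N : ℝ)) :=
  and_congr_right fun hu => forall₃_congr fun _ hK hKΩ => forall_congr' fun α =>
    exists_congr fun _ => smallE_pSemi_le_iff hΩ hK hKΩ hu α _

theorem negligible_iff (hΩ : IsOpen Ω) {u : ℝ → Euc d → ℂ} :
    Negligible Ω u ↔ SmoothNet Ω u ∧ ∀ K : Set (Euc d), IsCompact K → K ⊆ Ω → ∀ α : Fin d → ℕ,
      ∀ m : ℕ, DerivBound α K u m :=
  and_congr_right fun hu => forall₃_congr fun _ hK hKΩ => forall₂_congr fun α _ =>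
    smallE_pSemi_le_iff hΩ hK hKΩ hu α _

theorem negligible_zero (hΩ : IsOpen Ω) : Negligible Ω 0 := by
  refine (negligible_iff hΩ).2 ⟨fun _ _ => contDiffOn_const, fun K _ _ α m => ?_⟩
  filter_upwards [self_mem_nhdsWithin] with ε hε x _
  simpa [partialDeriv_zero] using pow_nonneg (le_of_lt hε) m

theorem Negligible.sub (hΩ : IsOpen Ω) {u v : ℝ → Euc d → ℂ} (hu : Negligible Ω u)
    (hv : Negligible Ω v) : Negligible Ω (u - v) := by
  rw [negligible_iff hΩ] at hu hv ⊢
  exact ⟨hu.1.sub hv.1, fun K hK hKΩ α m => (hu.2 K hK hKΩ α (m + 1)).sub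
    (hv.2 K hK hKΩ α (m + 1)) hΩ hKΩ hu.1 hv.1 (mod_cast m.lt_succ_self)⟩

theorem nulRel_equivalence (hΩ : IsOpen Ω) : Equivalence (nulRel Ω) := by
  have hrefl (u : ModNet Ω) : Negligible Ω (u.1 - u.1) := by
    simpa using negligible_zero hΩ
  have hsymm {u v : ModNet Ω} (huv : Negligible Ω (u.1 - v.1)) : Negligible Ω (v.1 - u.1) := by
    simpa using (negligible_zero hΩ).sub hΩ huv
  refine ⟨hrefl, hsymm, fun {u v w} huv hvw => ?_⟩
  have huw : Negligible Ω ((u.1 - v.1) - (w.1 - v.1)) := Negligible.sub hΩ huv (hsymm hvw)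
  rwa [sub_sub_sub_cancel_right] at huw

theorem nulRel_out (hΩ : IsOpen Ω) (v : ModNet Ω) :
    nulRel Ω (Quot.out (Quot.mk (nulRel Ω) v)) v :=
  (nulRel_equivalence hΩ).eqvGen_iff.1 (Quot.eqvGen_exact (Quot.out_eq _))

theorem smoothNet_out (u : Colombeau Ω) : SmoothNet Ω (Quot.out u).1 :=
  (Quot.out u).2.1

end Colombeau

section SharpTopology

variable {Ω K : Set (Euc d)}

-- At valuation `⊥` the junk value `EReal.toReal ⊥ = 0` makes `sharpNorm` equal to `1`, not `∞`.
theorem sharpNorm_lt_iff {z : ℝ → ℂ} {r b₀ : ℝ} (hr : 0 < r)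
    (hz : SmallE fun ε => ‖z ε‖ ≤ ε ^ b₀) :
    sharpNorm z < r ↔ ∃ b, -Real.log r < b ∧ SmallE fun ε => ‖z ε‖ ≤ ε ^ b := by
  have hbot : valuation z ≠ ⊥ :=
    ((EReal.bot_lt_coe b₀).trans_le (le_sSup (mem_image_of_mem _ hz))).ne'
  have hlt : sharpNorm z < r ↔ ((-Real.log r : ℝ) : EReal) < valuation z := by
    unfold sharpNorm
    split_ifs with htop
    · exact iff_of_true hr (htop ▸ EReal.coe_lt_top _)
    · rw [← Real.lt_log_iff_exp_lt hr, neg_lt, ← EReal.coe_lt_coe_iff,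
        EReal.coe_toReal htop hbot]
  rw [hlt, valuation, lt_sSup_iff, exists_mem_image]
  simp only [EReal.coe_lt_coe_iff, mem_ofPred_eq, and_comm]

theorem norm_pSemi {F : Type} [NormedAddCommGroup F] [NormedSpace ℝ F] (α : Fin d → ℕ)
    (K : Set (Euc d)) (f : Euc d → F) :
    ‖((pSemi α K f : ℝ) : ℂ)‖ = pSemi α K f := by
  rw [Complex.norm_real, Real.norm_of_nonneg]
  exact Real.sSup_nonneg (forall_mem_image.2 fun _ _ => norm_nonneg _)

theorem pNormDiff_lt_iff (hΩ : IsOpen Ω) (hK : IsCompact K) (hKΩ : K ⊆ Ω) (α : Fin d → ℕ)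
    (u v : Colombeau Ω) {r : ℝ} (hr : 0 < r) :
    PNormDiff Ω α K u v < r ↔
      ∃ b, -Real.log r < b ∧ DerivBound α K ((Quot.out u).1 - (Quot.out v).1) b := by
  have hsmooth := (smoothNet_out u).sub (smoothNet_out v)
  have hbound (b : ℝ) :
      (SmallE fun ε => ‖((pSemi α K (((Quot.out u).1 - (Quot.out v).1) ε) : ℝ) : ℂ)‖ ≤ ε ^ b) ↔
        DerivBound α K ((Quot.out u).1 - (Quot.out v).1) b := by
    simp only [norm_pSemi]
    exact smallE_pSemi_le_iff hΩ hK hKΩ hsmooth α b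
  obtain ⟨N, hN⟩ := ((moderate_iff hΩ).1 (Quot.out u).2).2 K hK hKΩ α
  obtain ⟨N', hN'⟩ := ((moderate_iff hΩ).1 (Quot.out v).2).2 K hK hKΩ α
  have hmoderate : DerivBound α K ((Quot.out u).1 - (Quot.out v).1) (-(max N N' : ℝ) - 1) :=
    (hN.mono subset_rfl (neg_le_neg (le_max_left _ _))).sub
      (hN'.mono subset_rfl (neg_le_neg (le_max_right _ _)))
      hΩ hKΩ (smoothNet_out u) (smoothNet_out v) (sub_one_lt _)
  simp only [← hbound] at hmoderate ⊢
  exact sharpNorm_lt_iff hr hmoderate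

theorem tendsto_sharpTopology (hΩ : IsOpen Ω) {ι : Type*} {l : Filter ι} {f : ι → Colombeau Ω}
    {u : Colombeau Ω}
    (h : ∀ (α : Fin d → ℕ) (K : Set (Euc d)), IsCompact K → K ⊆ Ω → ∀ m : ℕ,
      ∀ᶠ i in l, DerivBound α K ((Quot.out (f i)).1 - (Quot.out u).1) m) :
    Tendsto f l (@nhds _ (sharpTopology Ω) u) := by
  refine TopologicalSpace.tendsto_nhds_generateFrom_iff.2 ?_
  rintro _ ⟨w, α, K, r, hK, hKΩ, hr, rfl⟩ hu
  obtain ⟨b, hrb, hb⟩ := (pNormDiff_lt_iff hΩ hK hKΩ α w u hr).1 hu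
  obtain ⟨b', hrb', hb'⟩ := exists_between hrb
  obtain ⟨m, hm⟩ := exists_nat_ge b
  filter_upwards [h α K hK hKΩ m] with i hi
  have hw := hb.sub (hi.mono subset_rfl hm) hΩ hKΩ ((smoothNet_out w).sub (smoothNet_out u))
    ((smoothNet_out (f i)).sub (smoothNet_out u)) hb'
  rw [sub_sub_sub_cancel_right] at hw
  exact (pNormDiff_lt_iff hΩ hK hKΩ α w (f i) hr).2 ⟨b', hrb', hw⟩

end SharpTopology

section Approximation

variable {F : Type} [NormedAddCommGroup F] [NormedSpace ℝ F] {u v : ℝ → Euc d → F}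
  {K L Ω : Set (Euc d)} {φ χ : Euc d → ℝ} {κ : ℝ}

/-- Nets whose derivatives of order `n` are bounded on `Ω` by `ε^(-c - k n)` for small `ε`, with
`c` and `k` independent of `n`: the uniform strengthening of sublinearity enjoyed by the
approximating nets. -/
def UniformLinearGrowth (Ω : Set (Euc d)) (u : ℝ → Euc d → F) : Prop :=
  ∃ c k : ℝ, ∀ α : Fin d → ℕ, DerivBound α Ω u (-c - k * (∑ i, α i : ℕ))

theorem UniformLinearGrowth.mono (h : UniformLinearGrowth Ω u) (hL : L ⊆ Ω) :
    UniformLinearGrowth L u :=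
  let ⟨c, k, hck⟩ := h
  ⟨c, k, fun α => (hck α).mono hL le_rfl⟩

theorem UniformLinearGrowth.moderate {v : ℝ → Euc d → ℂ} (h : UniformLinearGrowth Ω v)
    (hΩ : IsOpen Ω) (hv : SmoothNet Ω v) : Moderate Ω v := by
  obtain ⟨c, k, hck⟩ := h
  refine (moderate_iff hΩ).2 ⟨hv, fun K _ hKΩ α => ?_⟩
  obtain ⟨N, hN⟩ := exists_nat_ge (c + k * (∑ i, α i : ℕ))
  exact ⟨N, (hck α).mono hKΩ (by linarith)⟩

theorem UniformLinearGrowth.sublinear {v : ModNet Ω} (h : UniformLinearGrowth Ω v.1) :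
    Sublinear Ω (Quot.mk (nulRel Ω) v) := by
  obtain ⟨c, k, hck⟩ := h
  refine ⟨v, rfl, fun K _ hKΩ x hxK => ⟨k + 1, fun n => -c - k * n, ?_, fun α => ?_⟩⟩
  · have hlin (n : ℕ) : -c - k * n + (k + 1) * n = -c + n := by ring
    simp only [hlin]
    exact tendsto_atTop_add_const_left _ _ tendsto_natCast_atTop_atTop
  · rw [smallE_iff_eventually]
    filter_upwards [hck α, Ioo_mem_nhdsGT one_pos] with ε hε hε01
    exact hε (x ε) (hKΩ (hxK ε hε01))

/-- The net obtained from `u` by cutting off with `χ` and mollifying with `φ` at scale `ε^κ`. -/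
def regularize (φ χ : Euc d → ℝ) (κ : ℝ) (u : ℝ → Euc d → F) : ℝ → Euc d → F :=
  fun ε => mollify φ (ε ^ κ) ⋆ (χ • u ε)

theorem contDiff_regularize (hφ : IsMollifier φ) (hχ : IsCutoff χ K Ω) (hΩ : IsOpen Ω)
    (hu : SmoothNet Ω u) {ε : ℝ} (hε : ε ∈ Ioo (0 : ℝ) 1) :
    ContDiff ℝ ∞ (regularize φ χ κ u ε) :=
  (hasCompactSupport_mollify hφ.hasCompactSupport
    (Real.rpow_pos_of_pos hε.1 κ).ne').contDiff_convolution_left _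
    (contDiff_mollify hφ.contDiff _) (hχ.contDiff_smul hΩ (hu ε hε)).continuous.locallyIntegrable

theorem uniformLinearGrowth_regularize (hφ : IsMollifier φ) (hχ : IsCutoff χ K Ω)
    (hΩ : IsOpen Ω) (hu : SmoothNet Ω u) {b : ℝ} (hb : DerivBound 0 (tsupport χ) u b) :
    UniformLinearGrowth univ (regularize φ χ κ u) := by
  refine ⟨1 - b, κ, fun α => ?_⟩
  set n : ℕ := ∑ i, α i
  set I : ℝ := ∫ y, ‖partialDeriv α φ y‖
  have hexp : -(1 - b) - κ * n < b - κ * n := by linarith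
  filter_upwards [hb, Ioo_mem_nhdsGT one_pos, eventually_const_mul_rpow_le_rpow I hexp]
    with ε hbε hε hI x _
  have hcutoff (y : Euc d) : ‖(χ • u ε) y‖ ≤ ε ^ b :=
    hχ.norm_smul_le (Real.rpow_nonneg hε.1.le b)
      (fun z hz => by simpa only [partialDeriv_zero_index] using hbε z hz) y
  calc ‖partialDeriv α (regularize φ χ κ u ε) x‖
      ≤ (ε ^ κ)⁻¹ ^ n * I * ε ^ b :=
        norm_partialDeriv_mollify_convolution_le hφ.contDiff hφ.hasCompactSupport
          (Real.rpow_pos_of_pos hε.1 κ)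
          (hχ.contDiff_smul hΩ (hu ε hε)).continuous.locallyIntegrable hcutoff α x
    _ = I * ε ^ (b - κ * n) := by
        rw [Real.rpow_sub hε.1, Real.rpow_mul hε.1.le, Real.rpow_natCast, inv_pow]
        ring
    _ ≤ ε ^ (-(1 - b) - κ * n) := hI

theorem derivBound_sub_regularize [CompleteSpace F] (hφ : IsMollifier φ) {η : ℝ} (hη : 0 < η)
    (hχ : IsCutoff χ (cthickening η K) Ω) (hΩ : IsOpen Ω) (hu : SmoothNet Ω u) (hκ : 0 < κ)
    {α : Fin d → ℕ} {a b : ℝ} (hb : b < a + κ)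
    (hbound : ∀ i, DerivBound (α + Pi.single i 1) (cthickening η K) u a) :
    DerivBound α K (u - regularize φ χ κ u) b := by
  obtain ⟨A, hA, hfderiv⟩ := exists_norm_fderiv_le_mul d F
  have hscale : ∀ᶠ ε in 𝓝[>] (0 : ℝ), ε ^ κ ≤ η :=
    (((Real.continuous_rpow_const hκ.le).tendsto' 0 0 (Real.zero_rpow hκ.ne')).mono_left
      nhdsWithin_le_nhds).eventually_le_const hη
  filter_upwards [eventually_all.2 hbound, Ioo_mem_nhdsGT one_pos, hscale,
    eventually_const_mul_rpow_le_rpow A hb] with ε hboundε hε hεη hA_le x hx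
  have hcut : ContDiff ℝ ∞ (χ • u ε) := hχ.contDiff_smul hΩ (hu ε hε)
  have hxK : x ∈ cthickening η K := self_subset_cthickening K hx
  have hlipschitz : ∀ y ∈ ball x (ε ^ κ), ‖fderiv ℝ (partialDeriv α (χ • u ε)) y‖ ≤ A * ε ^ a := by
    intro y hy
    have hyK : y ∈ cthickening η K :=
      thickening_subset_cthickening _ _ (mem_thickening_iff.2 ⟨x, hx, hy.trans_le hεη⟩)
    refine hfderiv _ y _ (Real.rpow_nonneg hε.1.le a) fun i => ?_
    rw [← partialDeriv_add_single isOpen_univ hcut.contDiffOn α i (mem_univ y),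
      hχ.partialDeriv_smul (u ε) _ hyK]
    exact hboundε i y hyK
  calc ‖partialDeriv α (u ε - regularize φ χ κ u ε) x‖
      = ‖partialDeriv α (regularize φ χ κ u ε) x - partialDeriv α (χ • u ε) x‖ := by
        rw [partialDeriv_sub hΩ (hu ε hε) (contDiff_regularize hφ hχ hΩ hu hε).contDiffOn α
          (hχ.subset hxK), Pi.sub_apply, norm_sub_rev, hχ.partialDeriv_smul (u ε) α hxK]
    _ ≤ A * ε ^ a * ε ^ κ :=
        hφ.norm_partialDeriv_convolution_sub_le (Real.rpow_pos_of_pos hε.1 κ) hcut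
          hχ.hasCompactSupport.smul_right α
          (mul_nonneg hA.le (Real.rpow_nonneg hε.1.le a)) hlipschitz
    _ = A * ε ^ (a + κ) := by rw [Real.rpow_add hε.1, mul_assoc]
    _ ≤ ε ^ b := hA_le

end Approximation

section Density

variable {K Ω : Set (Euc d)}

theorem exists_uniformLinearGrowth_approx (hΩ : IsOpen Ω) {u : ℝ → Euc d → ℂ}
    (hu : Moderate Ω u) (hK : IsCompact K) (hKΩ : K ⊆ Ω) (β : Fin d → ℕ) (m : ℕ) :
    ∃ v, SmoothNet Ω v ∧ UniformLinearGrowth Ω v ∧ ∀ α ≤ β, DerivBound α K (u - v) m := by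
  obtain ⟨hu_smooth, hu_bound⟩ := (moderate_iff hΩ).1 hu
  obtain ⟨η, hη, hηΩ⟩ := hK.exists_cthickening_subset_open hΩ hKΩ
  obtain ⟨χ, hχ⟩ := exists_isCutoff hK.cthickening hΩ hηΩ
  obtain ⟨φ, hφ⟩ := exists_isMollifier d
  choose N hN using hu_bound (cthickening η K) hK.cthickening hηΩ
  obtain ⟨N₀, hN₀⟩ := hu_bound (tsupport χ) hχ.hasCompactSupport hχ.tsupport_subset 0
  set M : ℕ := (Finset.Iic (β + 1)).sup N
  have hM (α : Fin d → ℕ) (hα : α ≤ β) (i : Fin d) :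
      DerivBound (α + Pi.single i 1) (cthickening η K) u (-(M : ℝ)) := by
    have hle : α + Pi.single i 1 ≤ β + 1 :=
      add_le_add hα (update_le_iff.2 ⟨le_rfl, fun _ _ => zero_le_one⟩)
    exact (hN _).mono subset_rfl
      (neg_le_neg (mod_cast Finset.le_sup (f := N) (Finset.mem_Iic.2 hle)))
  refine ⟨regularize φ χ (M + m + 1) u, fun ε hε =>
    (contDiff_regularize hφ hχ hΩ hu_smooth hε).contDiffOn,
    (uniformLinearGrowth_regularize hφ hχ hΩ hu_smooth hN₀).mono (subset_univ Ω), fun α hα => ?_⟩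
  exact derivBound_sub_regularize hφ hη hχ hΩ hu_smooth (by positivity) (by linarith) (hM α hα)

theorem exists_sublinear_approx (hΩ : IsOpen Ω) (u : Colombeau Ω) (hK : IsCompact K)
    (hKΩ : K ⊆ Ω) (β : Fin d → ℕ) (m : ℕ) :
    ∃ v, Sublinear Ω v ∧ ∀ α ≤ β, DerivBound α K ((Quot.out v).1 - (Quot.out u).1) m := by
  obtain ⟨v, hv_smooth, hv_growth, hv_close⟩ :=
    exists_uniformLinearGrowth_approx hΩ (Quot.out u).2 hK hKΩ β (m + 1)
  let w : ModNet Ω := ⟨v, hv_growth.moderate hΩ hv_smooth⟩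
  refine ⟨Quot.mk _ w, UniformLinearGrowth.sublinear (v := w) hv_growth, fun α hα => ?_⟩
  obtain ⟨hout_smooth, hout_small⟩ := (negligible_iff hΩ).1 (nulRel_out hΩ w)
  have h : DerivBound α K (((Quot.out (Quot.mk _ w)).1 - v) - ((Quot.out u).1 - v)) m :=
    (hout_small K hK hKΩ α (m + 1)).sub (hv_close α hα) hΩ hKΩ hout_smooth
      ((smoothNet_out u).sub hv_smooth) (mod_cast m.lt_succ_self)
  rwa [sub_sub_sub_cancel_right] at h

end Density

/-- the subalgebra of sublinear generalized functions is dense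
in 𝒢(Ω) for the sharp topology. -/
theorem sublinear_dense {d : ℕ} (Ω : Set (Euc d)) (hΩ : IsOpen Ω) :
    @Dense (Colombeau Ω) (sharpTopology Ω) {u : Colombeau Ω | Sublinear Ω u} := by
  let _ := sharpTopology Ω
  intro u
  choose v hv_sublinear hv_close using fun i : TopologicalSpace.Compacts Ω × (Fin d → ℕ) × ℕ =>
    exists_sublinear_approx hΩ u (i.1.isCompact.image continuous_subtype_val)
      (Subtype.coe_image_subset Ω i.1) i.2.1 i.2.2
  have hv_tendsto : Tendsto v atTop (𝓝 u) := by
    refine tendsto_sharpTopology hΩ fun α K hK hKΩ m => ?_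
    let K' : TopologicalSpace.Compacts Ω :=
      ⟨Subtype.val ⁻¹' K, Topology.IsInducing.subtypeVal.isCompact_preimage' hK (by simpa)⟩
    filter_upwards [eventually_ge_atTop (K', α, m)] with i hi
    refine (hv_close i α hi.2.1).mono (fun x hx => ?_) (mod_cast hi.2.2)
    exact ⟨⟨x, hKΩ hx⟩, hi.1 hx, rfl⟩
  exact mem_closure_of_tendsto hv_tendsto (.of_forall hv_sublinear)

end
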